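/- arXiv:1902.06817 — 2 statements merged into one kernel-verified Lean document; each statement's English description precedes it below -/
import Mathlib

section
/- Let r ≥ 2 and let a_1, …, a_r be integers with a_i ≥ 2 for all i, and let A be the real adjacency matrix of G(a_1,…,a_r). Then for every i with 1 ≤ i ≤ r−1, the dimension of ker(A + x_r^i·I) equals a_1·a_2·⋯·a_{i−1}·(a_i − 1) (where the empty product for i = 1 is 1); that is, −x_r^i is an eigenvalue of G(a_1,…,a_r) with multiplicity exactly a_1 ⋯ a_{i−1}(a_i − 1). -/
/-- The cograph with balanced cotree `T_G(a_1,…,a_{r-1},0|0,…,0,a_r)`: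
vertices are tuples `(v_1,…,v_r)` with `v_i ∈ {1,…,a_i}` (here indexed by `Fin r`,
coordinate `i : Fin r` corresponding to paper index `i+1`), two distinct tuples
being adjacent iff the least 1-based index at which they differ is odd
(equivalently, the least 0-based index is even). -/
def balG (r : ℕ) (a : ℕ → ℕ) :
    SimpleGraph ((i : Fin r) → Fin (a ((i : ℕ) + 1))) :=
  SimpleGraph.fromRel (fun u v => ∃ i : Fin r,
    u i ≠ v i ∧ Even (i : ℕ) ∧ ∀ j : Fin r, (j : ℕ) < (i : ℕ) → u j = v j)

open scoped Classical in
/-- The real adjacency matrix of `balG r a`. -/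
noncomputable def adjMat (r : ℕ) (a : ℕ → ℕ) :
    Matrix ((i : Fin r) → Fin (a ((i : ℕ) + 1))) ((i : Fin r) → Fin (a ((i : ℕ) + 1))) ℝ :=
  Matrix.of fun u v => if (balG r a).Adj u v then 1 else 0


/-- `gam a n l` is the product `a n * a (n-1) * ⋯ * a l`, i.e. γ_{n,l}, as an integer. -/
def gam (a : ℕ → ℕ) (n l : ℕ) : ℤ := ∏ k ∈ Finset.Icc l n, (a k : ℤ)

/-- The integer `x_r^i`: it equals `∑_{k=1}^{r-i} γ_{r,i+k} (-1)^k` when `i` is even and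
`∑_{k=1}^{r-i} γ_{r,i+k} (-1)^(k+1)` when `i` is odd, plus `1` exactly when `r` is odd. -/
def xri (a : ℕ → ℕ) (r i : ℕ) : ℤ :=
  (∑ k ∈ Finset.Icc 1 (r - i), gam a r (i + k) * (-1) ^ (if Even i then k else k + 1))
    + (if Odd r then 1 else 0)

/-!
Let `P k` be the projection averaging a function over the blocks of vertices with a common prefix
of length `k`. If two vertices first differ in the 0-based coordinate `m`, then their prefixes of
length `k` agree exactly for `k ≤ m`, and `∑ k ≤ m, (-1) ^ k` is `1` or `0` according to the
parity of `m`. Hence, up to a multiple of the identity, the adjacency matrix is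
`∑ k < r, (-1) ^ k γ_{r,k+1} P k`. As `P k * P l = P (min k l)` and `P r = 1`, the successive
differences `Q j = P j - P (j - 1)` (with `Q 0 = P 0`) are complete orthogonal idempotents, and
regrouping the sum gives the spectral decomposition `A = ∑ j ≤ r, -x_r^j Q j`. Two of the numbers
`x_r^j` differ by an alternating sum of the strictly decreasing block sizes `γ_{r,k+1}`, so they
are distinct, and the multiplicity of `-x_r^i` is the trace of `Q i`.
-/

open Finset Module

section SpectralDecomposition

theorem isProj_eigenspace_sum_smul {ι R M : Type*} [Fintype ι] [CommRing R] [IsDomain R]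
    [AddCommGroup M] [Module R M] [IsTorsionFree R M] {e : ι → End R M}
    (he : CompleteOrthogonalIdempotents e) {c : ι → R} {i : ι} (hc : ∀ j ≠ i, c j ≠ c i) :
    LinearMap.IsProj (End.eigenspace (∑ j, c j • e j) (c i)) (e i) := by
  classical
  refine ⟨fun v => ?_, fun v hv => ?_⟩
  · have hmul : (∑ j, c j • e j) * e i = c i • e i := by
      simp [sum_mul, he.mul_eq]
    exact End.mem_eigenspace_iff.mpr (LinearMap.congr_fun hmul v)
  · have hzero : ∀ j ≠ i, e j v = 0 := by
      intro j hj
      have hmul : e j * ∑ l, c l • e l = c j • e j := by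
        simp [mul_sum, he.mul_eq]
      have heq : c i • e j v = c j • e j v := by
        simpa [End.mem_eigenspace_iff.mp hv] using LinearMap.congr_fun hmul v
      have hsmul : (c j - c i) • e j v = 0 := by rw [sub_smul, heq, sub_self]
      exact (smul_eq_zero.mp hsmul).resolve_left (sub_ne_zero.mpr (hc j hj))
    calc
      e i v = ∑ j, e j v := (Fintype.sum_eq_single i hzero).symm
      _ = (∑ j, e j) v := by rw [LinearMap.sum_apply]
      _ = v := by rw [he.complete, End.one_apply]

theorem finrank_eigenspace_toLin'_sum_smul {ι n K : Type*} [Fintype ι] [Fintype n]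
    [DecidableEq n] [Field K] {e : ι → Matrix n n K} (he : CompleteOrthogonalIdempotents e)
    {c : ι → K} {i : ι} (hc : ∀ j ≠ i, c j ≠ c i) :
    (finrank K (End.eigenspace (Matrix.toLin' (∑ j, c j • e j)) (c i)) : K) = (e i).trace := by
  have hproj := isProj_eigenspace_sum_smul
    (he.map (Matrix.toLinAlgEquiv' : Matrix n n K ≃ₐ[K] _).toRingEquiv.toRingHom) hc
  have hmap : Matrix.toLin' (∑ j, c j • e j) = ∑ j, c j • Matrix.toLin' (e j) := by
    simp only [map_sum, LinearEquiv.map_smul]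
  rw [hmap, ← Matrix.trace_toLin'_eq (e i)]
  exact hproj.trace.symm

theorem eigenspace_toLin'_neg {n R : Type*} [Fintype n] [DecidableEq n] [CommRing R]
    (A : Matrix n n R) (μ : R) :
    End.eigenspace (Matrix.toLin' A) (-μ) = LinearMap.ker (Matrix.toLin' (A + μ • 1)) := by
  ext v
  rw [End.mem_eigenspace_iff, LinearMap.mem_ker, Matrix.toLin'_apply, Matrix.toLin'_apply,
    Matrix.add_mulVec, Matrix.smul_mulVec, Matrix.one_mulVec, neg_smul, eq_neg_iff_add_eq_zero]

end SpectralDecomposition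

section Increments

variable {R : Type*} [Ring R]

/-- The successive differences `P 0, P 1 - P 0, P 2 - P 1, …` of a sequence. For an increasing
chain of commuting projections, these are the projections onto the successive complements. -/
def increments (P : ℕ → R) : ℕ → R
  | 0 => P 0
  | k + 1 => P (k + 1) - P k

theorem sum_range_succ_increments (P : ℕ → R) (k : ℕ) :
    ∑ j ∈ range (k + 1), increments P j = P k := by
  rw [sum_range_succ']
  simp only [increments, sum_range_sub, sub_add_cancel]

theorem mul_increments {P : ℕ → R} (hP : ∀ k l, P k * P l = P (min k l)) (k j : ℕ) :
    P k * increments P j = if j ≤ k then increments P j else 0 := by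
  cases j with
  | zero => simp [increments, hP]
  | succ j =>
    simp only [increments, mul_sub, hP]
    split_ifs with h
    · rw [min_eq_right h, min_eq_right (by lia)]
    · rw [min_eq_left (by lia), min_eq_left (by lia), sub_self]

theorem increments_mul_increments_of_ne {P : ℕ → R} (hP : ∀ k l, P k * P l = P (min k l))
    {i j : ℕ} (hij : i ≠ j) : increments P i * increments P j = 0 := by
  cases i with
  | zero => exact (mul_increments hP 0 j).trans (if_neg (by lia))
  | succ i =>
    have hiff : j ≤ i + 1 ↔ j ≤ i := by lia
    rw [increments, sub_mul, mul_increments hP, mul_increments hP]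
    simp only [hiff, sub_self]

theorem completeOrthogonalIdempotents_increments {P : ℕ → R}
    (hP : ∀ k l, P k * P l = P (min k l)) {n : ℕ} (hn : P n = 1) :
    CompleteOrthogonalIdempotents fun j : Fin (n + 1) => increments P j := by
  refine CompleteOrthogonalIdempotents.iff_ortho_complete.mpr ⟨fun i j hij => ?_, ?_⟩
  · exact increments_mul_increments_of_ne hP (Fin.val_ne_of_ne hij)
  · rw [Fin.sum_univ_eq_sum_range (increments P), sum_range_succ_increments, hn]

theorem sum_smul_eq_sum_smul_increments {K : Type*} [Semiring K] [Module K R] (P : ℕ → R)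
    (c : ℕ → K) (n : ℕ) :
    ∑ k ∈ range n, c k • P k = ∑ j ∈ range (n + 1), (∑ k ∈ Ico j n, c k) • increments P j := by
  simp only [← sum_range_succ_increments P, smul_sum, sum_smul]
  exact sum_comm' fun k j => by simp only [mem_range, mem_Ico]; lia

end Increments

section AgreementMatrix

variable {r : ℕ} {α : Fin r → Type*}

/-- Two tuples agree in each of their first `k` coordinates; for `k ≥ r` this is equality. -/
def AgreeBelow (k : ℕ) (u v : ∀ j, α j) : Prop :=
  ∀ j : Fin r, (j : ℕ) < k → u j = v j

instance [∀ j, DecidableEq (α j)] (k : ℕ) (u v : ∀ j, α j) : Decidable (AgreeBelow k u v) :=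
  inferInstanceAs (Decidable (∀ j : Fin r, (j : ℕ) < k → u j = v j))

theorem agreeBelow_comm {k : ℕ} {u v : ∀ j, α j} : AgreeBelow k u v ↔ AgreeBelow k v u := by
  simp only [AgreeBelow, eq_comm]

theorem AgreeBelow.refl (k : ℕ) (u : ∀ j, α j) : AgreeBelow k u u := fun _ _ => rfl

theorem AgreeBelow.trans {k : ℕ} {u v w : ∀ j, α j} (huv : AgreeBelow k u v)
    (hvw : AgreeBelow k v w) : AgreeBelow k u w :=
  fun j hj => (huv j hj).trans (hvw j hj)

theorem AgreeBelow.mono {k l : ℕ} (hkl : k ≤ l) {u v : ∀ j, α j} (h : AgreeBelow l u v) :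
    AgreeBelow k u v :=
  fun j hj => h j (hj.trans_le hkl)

theorem agreeBelow_iff_eq {u v : ∀ j, α j} : AgreeBelow r u v ↔ u = v := by
  simp [AgreeBelow, funext_iff]

theorem exists_forall_agreeBelow_iff_le {u v : ∀ j, α j} (huv : u ≠ v) :
    ∃ m : Fin r, ∀ k, AgreeBelow k u v ↔ k ≤ m := by
  classical
  obtain ⟨m, hm⟩ : ∃ m : Fin r, Minimal (fun j => u j ≠ v j) m :=
    exists_minimal_of_wellFoundedLT _ (Function.ne_iff.mp huv)
  refine ⟨m, fun k => ⟨fun h => ?_, fun hk j hj => ?_⟩⟩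
  · by_contra! hmk
    exact hm.prop (h m hmk)
  · by_contra hne
    exact hm.not_prop_of_lt (Fin.lt_def.mpr (hj.trans_le hk)) hne

section Relation

variable [∀ j, DecidableEq (α j)] (R : Type*) [Semiring R]

variable (α) in
/-- The `0`-`1` matrix of the relation `AgreeBelow k`. -/
def agreementMatrix (k : ℕ) : Matrix (∀ j, α j) (∀ j, α j) R :=
  Matrix.of fun u v => if AgreeBelow k u v then 1 else 0

theorem agreementMatrix_apply (k : ℕ) (u v : ∀ j, α j) :
    agreementMatrix α R k u v = if AgreeBelow k u v then 1 else 0 :=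
  rfl

theorem transpose_agreementMatrix (k : ℕ) :
    (agreementMatrix α R k).transpose = agreementMatrix α R k := by
  ext u v
  simp only [Matrix.transpose_apply, agreementMatrix_apply, agreeBelow_comm (u := v)]

theorem agreementMatrix_self : agreementMatrix α R r = 1 := by
  ext u v
  simp only [agreementMatrix_apply, agreeBelow_iff_eq, Matrix.one_apply]

end Relation

variable [∀ j, Fintype (α j)]

variable (α) in
/-- The number of tuples with a prescribed prefix of length `k`, as the product of the sizes of
the remaining coordinates. -/
def blockSize (k : ℕ) : ℕ :=
  ∏ j : Fin r with k ≤ j.val, Fintype.card (α j)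

theorem blockSize_ne_zero [∀ j, Nonempty (α j)] (k : ℕ) : blockSize α k ≠ 0 :=
  prod_ne_zero_iff.mpr fun _ _ => Fintype.card_ne_zero

theorem blockSize_self : blockSize α r = 1 := by
  simp [blockSize]

theorem prod_card_mul_blockSize (k : ℕ) :
    (∏ j : Fin r with j.val < k, Fintype.card (α j)) * blockSize α k =
      Fintype.card (∀ j, α j) := by
  simp only [blockSize, Fintype.card_pi, ← not_lt, prod_filter_mul_prod_filter_not]

variable [∀ j, DecidableEq (α j)]

theorem card_filter_agreeBelow (k : ℕ) (u : ∀ j, α j) :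
    #{v | AgreeBelow k v u} = blockSize α k := by
  have hpi : ({v | AgreeBelow k v u} : Finset (∀ j, α j)) =
      Fintype.piFinset fun j : Fin r => if (j : ℕ) < k then {u j} else univ := by
    ext v
    rw [mem_filter_univ, Fintype.mem_piFinset]
    refine forall_congr' fun j => ?_
    split_ifs with h <;> simp [h]
  rw [hpi, Fintype.card_piFinset, blockSize, prod_filter]
  refine prod_congr rfl fun j _ => ?_
  by_cases h : (j : ℕ) < k <;> simp [h, not_le.mpr, not_lt.mp]

section BlockProducts

variable (R : Type*)

theorem agreementMatrix_mul_of_le [Semiring R] {k l : ℕ} (hkl : k ≤ l) :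
    agreementMatrix α R k * agreementMatrix α R l =
      (blockSize α l : R) • agreementMatrix α R k := by
  ext u w
  have hentry : ∀ v : ∀ j, α j,
      agreementMatrix α R k u v * agreementMatrix α R l v w =
        (if AgreeBelow l v w then 1 else 0) * agreementMatrix α R k u w := by
    intro v
    simp only [agreementMatrix_apply]
    by_cases hvw : AgreeBelow l v w
    · have hiff : AgreeBelow k u v ↔ AgreeBelow k u w :=
        ⟨fun h => h.trans (hvw.mono hkl), fun h => h.trans (agreeBelow_comm.mp (hvw.mono hkl))⟩
      simp only [hiff, hvw, if_true, mul_one, one_mul]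
    · simp only [hvw, if_false, mul_zero, zero_mul]
  simp only [Matrix.mul_apply, hentry, ← sum_mul, sum_boole, card_filter_agreeBelow,
    Matrix.smul_apply, smul_eq_mul]

theorem agreementMatrix_mul_of_ge [CommSemiring R] {k l : ℕ} (hlk : l ≤ k) :
    agreementMatrix α R k * agreementMatrix α R l =
      (blockSize α k : R) • agreementMatrix α R l := by
  simpa only [Matrix.transpose_mul, Matrix.transpose_smul, transpose_agreementMatrix] using
    congrArg Matrix.transpose (agreementMatrix_mul_of_le (α := α) R hlk)

theorem trace_agreementMatrix [Semiring R] (k : ℕ) :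
    (agreementMatrix α R k).trace = Fintype.card (∀ j, α j) := by
  simp [Matrix.trace, agreementMatrix_apply, AgreeBelow.refl]

end BlockProducts

section Field

variable (K : Type*) [Field K]

variable (α) in
/-- The projection that averages a function on tuples over each block of tuples with a common
prefix of length `k`. -/
def blockMean (k : ℕ) : Matrix (∀ j, α j) (∀ j, α j) K :=
  (blockSize α k : K)⁻¹ • agreementMatrix α K k

theorem blockMean_self : blockMean α K r = 1 := by
  simp [blockMean, blockSize_self, agreementMatrix_self]

variable [CharZero K] [∀ j, Nonempty (α j)]

theorem blockSize_smul_blockMean (k : ℕ) :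
    (blockSize α k : K) • blockMean α K k = agreementMatrix α K k :=
  smul_inv_smul₀ (Nat.cast_ne_zero.mpr (blockSize_ne_zero k)) _

theorem blockMean_mul_blockMean (k l : ℕ) :
    blockMean α K k * blockMean α K l = blockMean α K (min k l) := by
  have hsize : ∀ n, (blockSize α n : K) ≠ 0 := fun n => Nat.cast_ne_zero.mpr (blockSize_ne_zero n)
  rcases le_total k l with h | h
  · rw [min_eq_left h]
    simp only [blockMean, smul_mul_smul_comm, agreementMatrix_mul_of_le K h, smul_smul,
      inv_mul_cancel_right₀ (hsize l)]
  · rw [min_eq_right h]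
    simp only [blockMean, smul_mul_smul_comm, agreementMatrix_mul_of_ge K h, smul_smul,
      mul_comm (blockSize α k : K)⁻¹, inv_mul_cancel_right₀ (hsize k)]

theorem trace_blockMean (k : ℕ) :
    (blockMean α K k).trace = ∏ j : Fin r with j.val < k, (Fintype.card (α j) : K) := by
  have hsize : (blockSize α k : K) ≠ 0 := Nat.cast_ne_zero.mpr (blockSize_ne_zero k)
  rw [blockMean, Matrix.trace_smul, trace_agreementMatrix, ← prod_card_mul_blockSize k,
    smul_eq_mul, inv_mul_eq_iff_eq_mul₀ hsize]
  push_cast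
  ring

end Field

end AgreementMatrix

section AlternatingSum

variable {R : Type*} [Ring R] [LinearOrder R] [IsStrictOrderedRing R]

theorem alternating_sum_range_mem_Ioc {g : ℕ → R} {n : ℕ} (hanti : StrictAntiOn g (Set.Iic n))
    (hpos : 0 < g n) : ∑ k ∈ range (n + 1), (-1) ^ k * g k ∈ Set.Ioc 0 (g 0) := by
  induction n generalizing g with
  | zero => simpa using hpos
  | succ n ih =>
    have hshift : StrictAntiOn (fun k => g (k + 1)) (Set.Iic n) := fun i hi j hj hij =>
      hanti (Nat.succ_le_succ hi) (Nat.succ_le_succ hj) (Nat.succ_lt_succ hij)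
    have htail := ih hshift hpos
    have hfirst : g 1 < g 0 := hanti (by simp) (by simp) one_pos
    have hsplit : ∑ k ∈ range (n + 1 + 1), (-1) ^ k * g k =
        g 0 - ∑ k ∈ range (n + 1), (-1) ^ k * g (k + 1) := by
      rw [sum_range_succ', ← neg_add_eq_sub, ← sum_neg_distrib]
      simp [pow_succ]
    rw [hsplit]
    exact ⟨sub_pos.mpr (htail.2.trans_lt hfirst), sub_le_self _ htail.1.le⟩

theorem alternating_sum_Ico_ne_zero {g : ℕ → R} {p q : ℕ} (hpq : p < q)
    (hanti : StrictAntiOn g (Set.Ico p q)) (hpos : ∀ k ∈ Set.Ico p q, 0 < g k) :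
    ∑ k ∈ Ico p q, (-1) ^ k * g k ≠ 0 := by
  obtain ⟨n, rfl⟩ := Nat.exists_eq_add_of_lt hpq
  have hmem : ∀ k ≤ n, p + k ∈ Set.Ico p (p + n + 1) := fun k hk => ⟨by lia, by lia⟩
  have hsum := alternating_sum_range_mem_Ioc (g := fun k => g (p + k)) (n := n)
    (fun i hi j hj hij => hanti (hmem i hi) (hmem j hj) (by lia)) (hpos _ (hmem n le_rfl))
  have hshift : ∑ k ∈ Ico p (p + n + 1), (-1) ^ k * g k =
      (-1) ^ p * ∑ k ∈ range (n + 1), (-1) ^ k * g (p + k) := by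
    rw [sum_Ico_eq_sum_range, mul_sum]
    simp only [pow_add, mul_assoc, show p + n + 1 - p = n + 1 by lia]
  rw [hshift]
  exact mul_ne_zero (pow_ne_zero _ (neg_ne_zero.mpr one_ne_zero)) hsum.1.ne'

end AlternatingSum

section Cograph

variable {r : ℕ} {a : ℕ → ℕ}

variable (r a) in
/-- The range of the coordinate `j` of a vertex of `balG r a`, which has the 1-based index
`j + 1` in the paper. -/
abbrev Coord (j : Fin r) : Type :=
  Fin (a (j + 1))

theorem balG_adj_iff_even {u v : ∀ j, Coord r a j} {m : Fin r}
    (hm : ∀ k, AgreeBelow k u v ↔ k ≤ m) : (balG r a).Adj u v ↔ Even (m : ℕ) := by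
  have hne : u m ≠ v m := by
    intro heq
    have hsucc : AgreeBelow (m + 1) u v := fun j hj =>
      (Nat.lt_succ_iff_lt_or_eq.mp hj).elim ((hm m).mpr le_rfl j) fun h => Fin.ext h ▸ heq
    exact absurd ((hm _).mp hsucc) (by lia)
  have hfirst : ∀ i : Fin r, u i ≠ v i → AgreeBelow i u v → i = m := fun i hi hagree =>
    Fin.ext <| le_antisymm ((hm i).mp hagree) <| not_lt.mp fun him => hi ((hm m).mpr le_rfl i him)
  rw [balG, SimpleGraph.fromRel_adj]
  constructor
  · rintro ⟨-, ⟨i, hi, heven, hagree⟩ | ⟨i, hi, heven, hagree⟩⟩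
    · exact hfirst i hi hagree ▸ heven
    · exact hfirst i hi.symm (agreeBelow_comm.mp hagree) ▸ heven
  · exact fun heven => ⟨fun heq => hne (congrFun heq m), .inl ⟨m, hne, heven, (hm m).mpr le_rfl⟩⟩

theorem adjMat_eq_alternating_sum :
    adjMat r a = ∑ k ∈ range r, (-1 : ℝ) ^ k • agreementMatrix (Coord r a) ℝ k -
      (if Odd r then (1 : ℝ) else 0) • 1 := by
  ext u v
  simp only [adjMat, Matrix.of_apply, Matrix.sub_apply, Matrix.sum_apply, Matrix.smul_apply,
    agreementMatrix_apply, smul_eq_mul]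
  rcases eq_or_ne u v with rfl | huv
  · simp [AgreeBelow.refl, neg_one_geom_sum, ← Nat.not_odd_iff_even]
  · obtain ⟨m, hm⟩ := exists_forall_agreeBelow_iff_le huv
    have hfilter : {k ∈ range r | k ≤ (m : ℕ)} = range (m + 1) := by
      ext k
      simp only [mem_filter, mem_range]
      lia
    simp only [balG_adj_iff_even hm, hm, mul_ite, mul_one, mul_zero, ← sum_filter, hfilter,
      neg_one_geom_sum, Matrix.one_apply_ne huv, sub_zero, Nat.even_add_one, ite_not]

theorem prod_fin_filter_eq_prod_Icc {M : Type*} [CommMonoid M] {s t : ℕ} (ht : t ≤ r)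
    (f : ℕ → M) : ∏ j : Fin r with j.val ∈ Ico s t, f (j + 1) = ∏ k ∈ Icc (s + 1) t, f k := by
  have hsub : {j ∈ range r | j ∈ Ico s t} = Ico s t := by
    ext j
    simp only [mem_filter, mem_range, mem_Ico]
    lia
  rw [prod_filter, Fin.prod_univ_eq_prod_range fun j => if j ∈ Ico s t then f (j + 1) else 1,
    ← prod_filter, hsub, prod_Ico_add', Ico_add_one_right_eq_Icc]

theorem blockSize_coord (k : ℕ) : (blockSize (Coord r a) k : ℤ) = gam a r (k + 1) := by
  have hprod := prod_fin_filter_eq_prod_Icc (s := k) (le_refl r) fun j => (a j : ℤ)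
  simpa [blockSize, gam] using hprod

theorem prod_card_coord_lt {k : ℕ} (hk : k ≤ r) :
    ∏ j : Fin r with j.val < k, (Fintype.card (Coord r a j) : ℝ) = ∏ j ∈ Icc 1 k, (a j : ℝ) := by
  simpa using prod_fin_filter_eq_prod_Icc (s := 0) hk fun j => (a j : ℝ)

theorem gam_pos (ha : ∀ k ∈ Icc 1 r, 0 < a k) {l : ℕ} (hl : 1 ≤ l) : 0 < gam a r l :=
  prod_pos fun k hk => Nat.cast_pos.mpr (ha k (Icc_subset_Icc_left hl hk))

theorem gam_eq_mul_gam_succ {l : ℕ} (hl : l ≤ r) : gam a r l = a l * gam a r (l + 1) := by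
  rw [gam, gam, ← mul_prod_Ioc_eq_prod_Icc hl, Icc_add_one_left_eq_Ioc]

theorem strictAntiOn_gam (ha : ∀ k ∈ Icc 1 r, 2 ≤ a k) :
    StrictAntiOn (fun k => gam a r (k + 1)) (Set.Iio r) := by
  refine strictAntiOn_of_succ_lt Set.ordConnected_Iio fun k _ hk _ => ?_
  have hk' : k + 1 ≤ r := hk
  have ha' : ∀ k ∈ Icc 1 r, 0 < a k := fun k hk => two_pos.trans_le (ha k hk)
  have hfactor : (1 : ℤ) < a (k + 1) := mod_cast ha (k + 1) (mem_Icc.mpr ⟨by lia, hk'⟩)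
  simp only [Order.succ_eq_add_one, gam_eq_mul_gam_succ hk']
  exact lt_mul_of_one_lt_left (gam_pos ha' (by lia)) hfactor

theorem xri_eq_sub_alternating_sum (a : ℕ → ℕ) (r i : ℕ) :
    xri a r i = (if Odd r then 1 else 0) - ∑ k ∈ Ico i r, (-1) ^ k * gam a r (k + 1) := by
  have hsign : ∀ k, (-1 : ℤ) ^ (if Even i then k + 1 else k + 1 + 1) = -(-1) ^ (i + k) := by
    intro k
    split_ifs with hi
    · rw [pow_add _ i, hi.neg_one_pow]; ring
    · rw [pow_add _ i, (Nat.not_even_iff_odd.mp hi).neg_one_pow]; ring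
  rw [xri, ← Ico_add_one_right_eq_Icc, sum_Ico_eq_sum_range, sum_Ico_eq_sum_range]
  simp only [Nat.add_sub_cancel, add_comm 1, ← add_assoc, mul_comm (gam _ _ _), hsign,
    neg_mul, sum_neg_distrib]
  exact neg_add_eq_sub _ _

theorem injOn_xri (ha : ∀ k ∈ Icc 1 r, 2 ≤ a k) : Set.InjOn (xri a r) (Set.Iic r) := by
  have hne : ∀ p q, p < q → q ≤ r → xri a r p ≠ xri a r q := by
    intro p q hpq hq heq
    have hsub : Set.Ico p q ⊆ Set.Iio r := fun k hk => hk.2.trans_le hq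
    refine alternating_sum_Ico_ne_zero hpq ((strictAntiOn_gam ha).mono hsub)
      (fun k _ => gam_pos (fun k hk => two_pos.trans_le (ha k hk)) (by lia)) ?_
    rw [xri_eq_sub_alternating_sum, xri_eq_sub_alternating_sum, sub_right_inj,
      ← sum_Ico_consecutive _ hpq.le hq] at heq
    exact add_eq_right.mp heq
  intro p hp q hq heq
  rcases lt_trichotomy p q with hpq | hpq | hpq
  · exact absurd heq (hne p q hpq hq)
  · exact hpq
  · exact absurd heq.symm (hne q p hpq hp)

theorem nonempty_coord (ha : ∀ k ∈ Icc 1 r, 0 < a k) (j : Fin r) : Nonempty (Coord r a j) :=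
  Fin.pos_iff_nonempty.mp (ha (j + 1) (mem_Icc.mpr ⟨by lia, by lia⟩))

theorem adjMat_eq_sum_smul_increments (ha : ∀ k ∈ Icc 1 r, 0 < a k) :
    adjMat r a =
      ∑ j : Fin (r + 1), (-xri a r j : ℝ) • increments (blockMean (Coord r a) ℝ) j := by
  have := nonempty_coord ha
  have hblock : ∀ k, agreementMatrix (Coord r a) ℝ k =
      (gam a r (k + 1) : ℝ) • blockMean (Coord r a) ℝ k := fun k => by
    rw [← blockSize_smul_blockMean, ← blockSize_coord, Int.cast_natCast]
  have hone : (1 : Matrix (∀ j, Coord r a j) (∀ j, Coord r a j) ℝ) =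
      ∑ j ∈ range (r + 1), increments (blockMean (Coord r a) ℝ) j := by
    rw [sum_range_succ_increments, blockMean_self]
  rw [adjMat_eq_alternating_sum, Fin.sum_univ_eq_sum_range
    fun j => (-xri a r j : ℝ) • increments (blockMean (Coord r a) ℝ) j]
  simp only [hblock, smul_smul]
  rw [sum_smul_eq_sum_smul_increments, hone, smul_sum, ← sum_sub_distrib]
  refine sum_congr rfl fun j _ => ?_
  rw [xri_eq_sub_alternating_sum, ← sub_smul]
  push_cast
  rw [neg_sub]

theorem trace_increments_blockMean_succ (ha : ∀ k ∈ Icc 1 r, 0 < a k) {m : ℕ} (hm : m < r) :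
    (increments (blockMean (Coord r a) ℝ) (m + 1)).trace =
      ((∏ k ∈ Icc 1 m, a k) * (a (m + 1) - 1) : ℕ) := by
  have := nonempty_coord ha
  have hpos : 1 ≤ a (m + 1) := ha (m + 1) (mem_Icc.mpr ⟨by lia, hm⟩)
  rw [increments, Matrix.trace_sub, trace_blockMean, trace_blockMean, prod_card_coord_lt hm,
    prod_card_coord_lt hm.le, prod_Icc_succ_top (by lia)]
  push_cast [hpos]
  ring

end Cograph

theorem multiplicity_xri_general (r : ℕ) (a : ℕ → ℕ) (ha : ∀ k ∈ Finset.Icc 1 r, 2 ≤ a k)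
    (i : ℕ) (hi : i ∈ Finset.Icc 1 r) :
    Module.finrank ℝ
        (LinearMap.ker (Matrix.toLin' (adjMat r a + (xri a r i : ℝ) • 1))) =
      (∏ k ∈ Finset.Icc 1 (i - 1), a k) * (a i - 1) := by
  obtain ⟨hi1, hir⟩ := mem_Icc.mp hi
  have hpos : ∀ k ∈ Icc 1 r, 0 < a k := fun k hk => two_pos.trans_le (ha k hk)
  have := nonempty_coord hpos
  have hcomplete := completeOrthogonalIdempotents_increments
    (blockMean_mul_blockMean (α := Coord r a) ℝ) (blockMean_self ℝ)
  obtain ⟨m, rfl⟩ : ∃ m, i = m + 1 := ⟨i - 1, by lia⟩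
  let level : Fin (r + 1) := ⟨m + 1, by lia⟩
  have hdistinct : ∀ j ≠ level, (-xri a r j : ℝ) ≠ -xri a r level := fun j hj heq =>
    hj <| Fin.ext <| injOn_xri ha j.is_le level.is_le <| by exact_mod_cast neg_injective heq
  have hrank := finrank_eigenspace_toLin'_sum_smul hcomplete hdistinct
  rw [← adjMat_eq_sum_smul_increments hpos, eigenspace_toLin'_neg,
    trace_increments_blockMean_succ hpos (by lia)] at hrank
  exact_mod_cast hrank

/-- For `r ≥ 2`, `a_i ≥ 2` and `1 ≤ i ≤ r - 1`, the value `-x_r^i` is an eigenvalue of the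
cograph with balanced cotree `T_G(a_1,…,a_{r-1},0|0,…,0,a_r)` with multiplicity exactly
`a_1 ⋯ a_{i-1} (a_i - 1)`. -/
theorem multiplicity_xri (r : ℕ) (hr : 2 ≤ r) (a : ℕ → ℕ) (ha : ∀ k, 2 ≤ a k)
    (i : ℕ) (hi1 : 1 ≤ i) (hi2 : i ≤ r - 1) :
    Module.finrank ℝ
        (LinearMap.ker (Matrix.toLin' (adjMat r a + (xri a r i : ℝ) • 1))) =
      (∏ k ∈ Finset.Icc 1 (i - 1), a k) * (a i - 1) :=
  multiplicity_xri_general r a (fun k _ => ha k) i (mem_Icc.mpr ⟨hi1, by lia⟩)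
end

section
/- Let r ≥ 2 and let a_1, …, a_r be integers with a_i ≥ 2 for all i, and let A be the real adjacency matrix of G(a_1,…,a_r). Define λ := Σ_{i=1}^{r−1} a_1⋯a_{i−1}(a_i − 1)·x_r^i + ε, where ε = a_1⋯a_{r−1}(a_r − 1) if r is odd and ε = 0 if r is even. Then λ is an eigenvalue of G(a_1,…,a_r), i.e. ker(A − λI) ≠ {0}. (λ is the one remaining eigenvalue, obtained from the vanishing of the trace of A, after the eigenvalues −x_r^i with multiplicity a_1⋯a_{i−1}(a_i−1) for 1 ≤ i ≤ r−1 and the eigenvalue −1 (r odd) or 0 (r even) with multiplicity a_1⋯a_{r−1}(a_r−1) are accounted for.) -/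
/-! The graph is regular: the neighbours of a tuple are the tuples first differing from it at a
0-based even index `i`, and there are `(a_{i+1} - 1) γ_{r,i+2} = γ_{r,i+1} - γ_{r,i+2}` of them
for each such `i`; these counts telescope to `-x_r^0`. Since `x_r^r` is `1` or `0` according to
the parity of `r`, `ε` is the `i = r` term of the sum defining `λ`; Abel summation with
`x_r^{i-1} - x_r^i = (-1)^i γ_{r,i}` and `a_1 ⋯ a_{i-1} γ_{r,i} = γ_{r,1}` then gives `λ =
-x_r^0` as well, so the constant vectors are eigenvectors for `λ`. -/

section

open Finset

section FirstDifference

variable {ι : Type*} {α : ι → Type*}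

/-- The index `i` is the least one at which the tuples `u` and `v` differ. -/
def DiffersFirstAt [LT ι] (u v : ∀ i, α i) (i : ι) : Prop :=
  u i ≠ v i ∧ ∀ j < i, u j = v j

namespace DiffersFirstAt

theorem symm [LT ι] {u v : ∀ i, α i} {i : ι} (h : DiffersFirstAt u v i) : DiffersFirstAt v u i :=
  ⟨h.1.symm, fun j hj => (h.2 j hj).symm⟩

theorem ne [LT ι] {u v : ∀ i, α i} {i : ι} (h : DiffersFirstAt u v i) : u ≠ v :=
  fun huv => h.1 (congrFun huv i)

theorem index_unique [LinearOrder ι] {u v : ∀ i, α i} {i j : ι} (hi : DiffersFirstAt u v i)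
    (hj : DiffersFirstAt u v j) : i = j :=
  le_antisymm (le_of_not_gt fun h => hj.1 (hi.2 j h)) (le_of_not_gt fun h => hi.1 (hj.2 i h))

end DiffersFirstAt

variable [LinearOrder ι] [Fintype ι] [LocallyFiniteOrderTop ι] [∀ i, Fintype (α i)]

open scoped Classical in
theorem card_filter_differsFirstAt (u : ∀ i, α i) (i : ι) :
    #{v | DiffersFirstAt u v i} =
      (Fintype.card (α i) - 1) * ∏ j ∈ Ioi i, Fintype.card (α j) := by
  let choices (j : ι) : Finset (α j) := if j < i then {u j} else if j = i then {u j}ᶜ else univ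
  have filter_eq : ({v | DiffersFirstAt u v i} : Finset (∀ j, α j)) = Fintype.piFinset choices := by
    ext v
    rw [mem_filter_univ]
    simp only [Fintype.mem_piFinset, choices, DiffersFirstAt]
    constructor
    · rintro ⟨hne, heq⟩ j
      rcases lt_trichotomy j i with hj | rfl | hj
      · simp [hj, heq j hj]
      · simpa using hne.symm
      · simp [hj.not_gt, hj.ne']
    · intro hv
      exact ⟨by simpa [eq_comm] using hv i, fun j hj => by simpa [hj, eq_comm] using hv j⟩
  calc #{v | DiffersFirstAt u v i} = ∏ j, #(choices j) := by
        rw [filter_eq, Fintype.card_piFinset]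
    _ = ∏ j ∈ Ici i, #(choices j) := by
        refine (prod_subset (subset_univ _) fun j _ hj => ?_).symm
        simp [choices, not_le.mp (mt mem_Ici.mpr hj)]
    _ = #(choices i) * ∏ j ∈ Ioi i, #(choices j) := (mul_prod_Ioi_eq_prod_Ici i).symm
    _ = (Fintype.card (α i) - 1) * ∏ j ∈ Ioi i, Fintype.card (α j) := by
        congr 1
        · simp [choices, card_compl]
        · refine prod_congr rfl fun j hj => ?_
          simp [choices, (mem_Ioi.mp hj).not_gt, (mem_Ioi.mp hj).ne']

open scoped Classical in
theorem card_filter_exists_differsFirstAt (u : ∀ i, α i) (S : Finset ι) :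
    #{v | ∃ i ∈ S, DiffersFirstAt u v i} =
      ∑ i ∈ S, (Fintype.card (α i) - 1) * ∏ j ∈ Ioi i, Fintype.card (α j) := by
  have filter_eq : ({v | ∃ i ∈ S, DiffersFirstAt u v i} : Finset (∀ i, α i)) =
      S.biUnion fun i => {v | DiffersFirstAt u v i} := by
    ext v
    simp
  rw [filter_eq, card_biUnion]
  · simp only [card_filter_differsFirstAt]
  · intro i _ j _ hij
    exact disjoint_filter.mpr fun v _ hi hj => hij (hi.index_unique hj)

end FirstDifference

theorem gam_self (a : ℕ → ℕ) (n : ℕ) : gam a n n = a n := by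
  simp [gam]

theorem gam_mul_gam (a : ℕ → ℕ) {l m n : ℕ} (hl : l ≤ m + 1) (hm : m ≤ n) :
    gam a m l * gam a n (m + 1) = gam a n l := by
  simp only [gam, ← Ico_add_one_right_eq_Icc]
  exact prod_Ico_consecutive _ hl (by omega)

theorem prod_Ioi_eq_gam (a : ℕ → ℕ) {r : ℕ} (i : Fin r) :
    ∏ j ∈ Ioi i, (a (j + 1) : ℤ) = gam a r (i + 2) := by
  have shift := prod_Ico_add' (fun k => (a k : ℤ)) (i + 1) r 1
  rw [gam, ← Ico_add_one_right_eq_Icc, ← shift, Ico_add_one_left_eq_Ioo,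
    ← Fin.map_valEmbedding_Ioi, prod_map]
  simp only [Fin.valEmbedding_apply]

theorem xri_self (a : ℕ → ℕ) (r : ℕ) : xri a r r = if Odd r then 1 else 0 := by
  simp [xri]

theorem xri_eq_add_xri_succ (a : ℕ → ℕ) {r i : ℕ} (hi : i < r) :
    xri a r i = (-1) ^ (i + 1) * gam a r (i + 1) + xri a r (i + 1) := by
  have term_eq (i k : ℕ) :
      gam a r (i + k) * (-1) ^ (if Even i then k else k + 1) =
        (-1) ^ (i + k) * gam a r (i + k) := by
    rcases Nat.even_or_odd i with h | h
    · rw [if_pos h, pow_add _ i, h.neg_one_pow]; ring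
    · rw [if_neg (Nat.not_even_iff_odd.mpr h), pow_add _ i, h.neg_one_pow]; ring
  have sum_eq (i : ℕ) (hi : i ≤ r) :
      ∑ k ∈ Icc 1 (r - i), (-1) ^ (i + k) * gam a r (i + k) =
        ∑ k ∈ Ico (i + 1) (r + 1), (-1) ^ k * gam a r k := by
    rw [← Ico_add_one_right_eq_Icc, sum_Ico_add (fun k => (-1) ^ k * gam a r k)]
    congr 2 <;> omega
  simp only [xri, term_eq]
  rw [sum_eq i hi.le, sum_eq (i + 1) hi, sum_eq_sum_Ico_succ_bot (by omega)]
  ring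

theorem sum_range_even_gam_sub_gam_succ (a : ℕ → ℕ) (r : ℕ) :
    ∑ i ∈ range r with Even i, (gam a r (i + 1) - gam a r (i + 2)) = -xri a r 0 := by
  -- For `i < r`, `y i` is `x_r^i` or `x_r^{i+1}`, whichever has an even upper index.
  let y (i : ℕ) : ℤ := xri a r i - if Odd i then gam a r (i + 1) else 0
  have y_zero : y 0 = xri a r 0 := by simp [y]
  have y_last : y r = 0 := by
    have : gam a r (r + 1) = 1 := by simp [gam]
    simp [y, xri_self, this]
  have term_eq (i : ℕ) (hi : i < r) :
      (if Even i then gam a r (i + 1) - gam a r (i + 2) else 0) = y (i + 1) - y i := by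
    simp only [y, xri_eq_add_xri_succ a hi]
    rcases Nat.even_or_odd i with h | h
    · rw [if_pos h, if_pos h.add_one, if_neg (Nat.not_odd_iff_even.mpr h), h.add_one.neg_one_pow]
      ring
    · rw [if_neg (Nat.not_even_iff_odd.mpr h), if_neg (Nat.not_odd_iff_even.mpr h.add_one),
        if_pos h, h.add_one.neg_one_pow]
      ring
  rw [sum_filter, sum_congr rfl fun i hi => term_eq i (mem_range.mp hi), sum_range_sub, y_zero,
    y_last, zero_sub]

theorem sum_Icc_gam_mul_sub_one_mul_xri (a : ℕ → ℕ) (r : ℕ) :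
    ∑ i ∈ Icc 1 r, gam a (i - 1) 1 * (a i - 1) * xri a r i = -xri a r 0 := by
  have term_eq (i : ℕ) (hi : i < r) :
      gam a i 1 * (a (i + 1) - 1) * xri a r (i + 1) =
        (gam a (i + 1) 1 * xri a r (i + 1) - gam a i 1 * xri a r i) -
          gam a r 1 * (-1) ^ i := by
    rw [xri_eq_add_xri_succ a hi, ← gam_mul_gam a (by omega : 1 ≤ i + 1) i.le_succ,
      ← gam_mul_gam a (by omega : 1 ≤ i + 1) hi.le, gam_self]
    ring
  have gam_zero : gam a 0 1 = 1 := by simp [gam]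
  calc ∑ i ∈ Icc 1 r, gam a (i - 1) 1 * (a i - 1) * xri a r i
      = ∑ i ∈ range r, gam a i 1 * (a (i + 1) - 1) * xri a r (i + 1) := by
        rw [← Ico_add_one_right_eq_Icc, sum_Ico_eq_sum_range]
        simp [add_comm 1]
    _ = (gam a r 1 * xri a r r - gam a 0 1 * xri a r 0) -
          gam a r 1 * ∑ i ∈ range r, (-1) ^ i := by
        rw [sum_congr rfl fun i hi => term_eq i (mem_range.mp hi), sum_sub_distrib,
          sum_range_sub (fun i => gam a i 1 * xri a r i), mul_sum]
    _ = -xri a r 0 := by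
        rw [xri_self, gam_zero, neg_one_geom_sum]
        split_ifs <;> grind

theorem remainingEigenvalue_eq_neg_xri_zero {r : ℕ} (hr : 1 ≤ r) {a : ℕ → ℕ}
    (ha : ∀ k, 1 ≤ a k) :
    (∑ i ∈ Icc 1 (r - 1), (((∏ k ∈ Icc 1 (i - 1), a k) * (a i - 1) : ℕ) : ℤ) * xri a r i) +
        (if Odd r then (((∏ k ∈ Icc 1 (r - 1), a k) * (a r - 1) : ℕ) : ℤ) else 0) =
      -xri a r 0 := by
  have coeff_eq (i : ℕ) :
      (((∏ k ∈ Icc 1 (i - 1), a k) * (a i - 1) : ℕ) : ℤ) = gam a (i - 1) 1 * (a i - 1) := by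
    simp [gam, Nat.cast_pred (ha i)]
  simp only [coeff_eq]
  rw [← sum_Icc_gam_mul_sub_one_mul_xri, ← mul_one (_ * _ : ℤ), ← mul_ite_zero, ← xri_self a r]
  obtain ⟨n, rfl⟩ := Nat.exists_eq_add_of_le' hr
  exact (sum_Icc_succ_top (by omega) _).symm

theorem balG_adj_iff {r : ℕ} {a : ℕ → ℕ} {u v : (i : Fin r) → Fin (a (i + 1))} :
    (balG r a).Adj u v ↔ ∃ i : Fin r, Even (i : ℕ) ∧ DiffersFirstAt u v i := by
  rw [balG, SimpleGraph.fromRel_adj]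
  constructor
  · rintro ⟨-, ⟨i, hne, he, heq⟩ | ⟨i, hne, he, heq⟩⟩
    · exact ⟨i, he, hne, heq⟩
    · exact ⟨i, he, DiffersFirstAt.symm ⟨hne, heq⟩⟩
  · rintro ⟨i, he, h⟩
    exact ⟨h.ne, Or.inl ⟨i, h.1, he, h.2⟩⟩

/-- The common vertex degree of `balG r a`: the summand at `i` counts the tuples that first differ
from a given one at the coordinate `i`. -/
def balGDegree (r : ℕ) (a : ℕ → ℕ) : ℕ :=
  ∑ i ∈ {i : Fin r | Even (i : ℕ)}, (a (i + 1) - 1) * ∏ j ∈ Ioi i, a (j + 1)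

open scoped Classical in
theorem balG_isRegularOfDegree (r : ℕ) (a : ℕ → ℕ) :
    (balG r a).IsRegularOfDegree (balGDegree r a) := by
  intro u
  have h := card_filter_exists_differsFirstAt u {i : Fin r | Even (i : ℕ)}
  simp only [mem_filter_univ, ← balG_adj_iff, Fintype.card_fin] at h
  rw [balGDegree, ← h, ← SimpleGraph.card_neighborFinset_eq_degree,
    SimpleGraph.neighborFinset_eq_filter]

theorem cast_balGDegree_eq_neg_xri_zero (r : ℕ) {a : ℕ → ℕ} (ha : ∀ k, 1 ≤ a k) :
    (balGDegree r a : ℤ) = -xri a r 0 := by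
  have term_eq (i : Fin r) :
      (((a (i + 1) - 1) * ∏ j ∈ Ioi i, a (j + 1) : ℕ) : ℤ) =
        gam a r (i + 1) - gam a r (i + 2) := by
    rw [Nat.cast_mul, Nat.cast_pred (ha _), Nat.cast_prod, prod_Ioi_eq_gam,
      ← gam_mul_gam a (Nat.le_succ _) i.isLt, gam_self]
    ring
  rw [balGDegree, Nat.cast_sum, sum_congr rfl fun i _ => term_eq i,
    ← sum_range_even_gam_sub_gam_succ, sum_filter, sum_filter]
  exact Fin.sum_univ_eq_sum_range
    (fun i => if Even i then gam a r (i + 1) - gam a r (i + 2) else 0) r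

theorem ker_toLin'_adjMatrix_sub_smul_one_ne_bot_of_isRegularOfDegree {V K : Type*}
    [Fintype V] [DecidableEq V] [Nonempty V] [CommRing K] [Nontrivial K]
    {G : SimpleGraph V} [DecidableRel G.Adj] {d : ℕ} (hG : G.IsRegularOfDegree d) :
    LinearMap.ker (Matrix.toLin' (G.adjMatrix K - (d : K) • 1)) ≠ ⊥ := by
  refine (Submodule.ne_bot_iff _).mpr
    ⟨Function.const V 1, ?_, Function.const_ne_zero.mpr one_ne_zero⟩
  ext v
  simp [hG.degree_eq v]

end

/-- The remaining eigenvalue `λ = ∑_{i=1}^{r-1} a_1⋯a_{i-1}(a_i - 1) x_r^i + ε`,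
with `ε = a_1⋯a_{r-1}(a_r - 1)` if `r` is odd and `ε = 0` if `r` is even, is an
eigenvalue of the cograph with balanced cotree `T_G(a_1,…,a_{r-1},0|0,…,0,a_r)`. -/
theorem remaining_eigenvalue (r : ℕ) (hr : 2 ≤ r) (a : ℕ → ℕ) (ha : ∀ k, 2 ≤ a k) :
    LinearMap.ker (Matrix.toLin' (adjMat r a -
      (((∑ i ∈ Finset.Icc 1 (r - 1),
          (((∏ k ∈ Finset.Icc 1 (i - 1), a k) * (a i - 1) : ℕ) : ℤ) * xri a r i) +
        (if Odd r then (((∏ k ∈ Finset.Icc 1 (r - 1), a k) * (a r - 1) : ℕ) : ℤ) else 0) : ℤ)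
        : ℝ) • 1)) ≠ ⊥ := by
  classical
  have ha_pos (k : ℕ) : 1 ≤ a k := one_le_two.trans (ha k)
  have (i : Fin r) : NeZero (a (i + 1)) := ⟨Nat.one_le_iff_ne_zero.mp (ha_pos _)⟩
  rw [remainingEigenvalue_eq_neg_xri_zero (one_le_two.trans hr) ha_pos,
    ← cast_balGDegree_eq_neg_xri_zero r ha_pos, Int.cast_natCast]
  exact ker_toLin'_adjMatrix_sub_smul_one_ne_bot_of_isRegularOfDegree (balG_isRegularOfDegree r a)
end
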